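/- Let ρ_AB be a density matrix on ℂ^m ⊗ ℂ^n, let Π_B = {|b_μ⟩⟨b_μ|} be a rank-one PVM on B, and let σ_ABC = V ρ_AB V† for the associated isometry V|ψ⟩_B = Σ_μ |b_μ⟩⟨b_μ|ψ⟩ ⊗ |μ⟩_C. Then S(σ_AB) + S(σ_BC) − S(σ_ABC) − S(σ_B) = Σ_μ p_μ S(ρ_{A,μ}) + S(ρ_B) − S(ρ_AB), where p_μ = ⟨b_μ|ρ_B|b_μ⟩ and, when p_μ > 0, ρ_{A,μ} = (1/p_μ) Tr_B((1_A ⊗ |b_μ⟩⟨b_μ|) ρ_AB). -/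

import Mathlib

open Matrix ComplexOrder
open scoped Kronecker

/-- von Neumann entropy `S(ρ) = -∑ λᵢ log λᵢ` via eigenvalues (0 if not Hermitian). -/
noncomputable def vnEntropy {N : Type*} [Fintype N] [DecidableEq N]
    (A : Matrix N N ℂ) : ℝ :=
  if h : A.IsHermitian then -∑ i, h.eigenvalues i * Real.log (h.eigenvalues i) else 0

/-- Matrix logarithm via the spectral decomposition (with `Real.log 0 = 0` convention). -/
noncomputable def matLog {N : Type*} [Fintype N] [DecidableEq N]
    (A : Matrix N N ℂ) : Matrix N N ℂ :=
  if h : A.IsHermitian then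
    (h.eigenvectorUnitary : Matrix N N ℂ) *
      Matrix.diagonal (fun i => (Real.log (h.eigenvalues i) : ℂ)) *
      star (h.eigenvectorUnitary : Matrix N N ℂ)
  else 0

/-- Positive square root via the spectral decomposition. -/
noncomputable def matSqrt {N : Type*} [Fintype N] [DecidableEq N]
    (A : Matrix N N ℂ) : Matrix N N ℂ :=
  if h : A.IsHermitian then
    (h.eigenvectorUnitary : Matrix N N ℂ) *
      Matrix.diagonal (fun i => (Real.sqrt (h.eigenvalues i) : ℂ)) *
      star (h.eigenvectorUnitary : Matrix N N ℂ)
  else 0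

/-- Inverse square root of a positive definite matrix. -/
noncomputable def matInvSqrt {N : Type*} [Fintype N] [DecidableEq N]
    (A : Matrix N N ℂ) : Matrix N N ℂ :=
  matSqrt A⁻¹

/-- Rank-one projection `|b⟩⟨b|`. -/
noncomputable def proj {n : Type*} (b : n → ℂ) : Matrix n n ℂ :=
  vecMulVec b (star b)

/-- Partial trace over the second (B) tensor factor. -/
noncomputable def ptraceB {m n : Type*} [Fintype n]
    (ρ : Matrix (m × n) (m × n) ℂ) : Matrix m m ℂ :=
  Matrix.of fun i j => ∑ k, ρ (i, k) (j, k)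

/-- Partial trace over the first (A) tensor factor. -/
noncomputable def ptraceA {m n : Type*} [Fintype m]
    (ρ : Matrix (m × n) (m × n) ℂ) : Matrix n n ℂ :=
  Matrix.of fun i j => ∑ k, ρ (k, i) (k, j)

/-!
Tracing out the pointer system `C` dephases `B` in the measured basis, so that
`σ_AB = ∑ μ, R μ ⊗ |b μ⟩⟨b μ|` and `σ_B = ∑ μ, p μ |b μ⟩⟨b μ|`, where
`R μ = Tr_B((1 ⊗ |b μ⟩⟨b μ|) ρ_AB)` has trace `p μ`. Orthogonality of the flags `|b μ⟩` gives
`S(σ_AB) = ∑ μ, S(R μ) = ∑ μ, p μ S(R μ / p μ) + H(p)` and `S(σ_B) = H(p)`, so the Shannon entropy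
`H(p)` cancels. As `V` is an isometry, `S(σ_ABC) = S(ρ_AB)` and `S(σ_BC) = S(ρ_B)`.
-/

section Entropy

variable {M N ι : Type*} [Fintype M] [DecidableEq M] [Fintype N] [DecidableEq N]
  [Fintype ι] [DecidableEq ι]

lemma charpoly_blockDiagonal {α : Type*} [CommRing α] (R : ι → Matrix M M α) :
    (blockDiagonal R).charpoly = ∏ μ, (R μ).charpoly := by
  have hchar : charmatrix (blockDiagonal R) = blockDiagonal fun μ => charmatrix (R μ) := by
    ext1 ⟨i, μ⟩ ⟨j, ν⟩
    by_cases h : μ = ν <;>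
      simp [charmatrix_apply, blockDiagonal_apply, diagonal_apply, h]
  simp only [charpoly, hchar, det_blockDiagonal]

lemma vnEntropy_eq_sum_eigenvalues {A : Matrix N N ℂ} (hA : A.IsHermitian) :
    vnEntropy A = ∑ i, Real.negMulLog (hA.eigenvalues i) := by
  simp [vnEntropy, dif_pos hA, Real.negMulLog]

lemma vnEntropy_eq_sum_roots_charpoly {A : Matrix N N ℂ} (hA : A.IsHermitian) :
    vnEntropy A = (A.charpoly.roots.map fun z => Real.negMulLog z.re).sum := by
  rw [vnEntropy_eq_sum_eigenvalues hA, hA.roots_charpoly_eq_eigenvalues, Multiset.map_map]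
  simp

@[simp]
lemma vnEntropy_zero : vnEntropy (0 : Matrix N N ℂ) = 0 := by
  rw [vnEntropy_eq_sum_roots_charpoly isHermitian_zero]
  simp [charpoly_zero, Multiset.map_nsmul, Multiset.sum_nsmul]

lemma vnEntropy_diagonal (d : N → ℝ) :
    vnEntropy (diagonal fun i => (d i : ℂ)) = ∑ i, Real.negMulLog (d i) := by
  have hd : (diagonal fun i => (d i : ℂ)).IsHermitian :=
    isHermitian_diagonal_iff.2 fun i => Complex.conj_ofReal (d i)
  rw [vnEntropy_eq_sum_roots_charpoly hd, charpoly_diagonal, Polynomial.roots_prod _ _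
    (Finset.prod_ne_zero_iff.2 fun i _ => Polynomial.X_sub_C_ne_zero _)]
  simp

lemma vnEntropy_mul_comm {A : Matrix M N ℂ} {B : Matrix N M ℂ}
    (hAB : (A * B).IsHermitian) (hBA : (B * A).IsHermitian) :
    vnEntropy (A * B) = vnEntropy (B * A) := by
  have hroots := congrArg Polynomial.roots (charpoly_mul_comm' A B)
  rw [Polynomial.roots_mul ((Polynomial.monic_X_pow _).mul (charpoly_monic _)).ne_zero,
    Polynomial.roots_mul ((Polynomial.monic_X_pow _).mul (charpoly_monic _)).ne_zero,
    Polynomial.roots_X_pow, Polynomial.roots_X_pow] at hroots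
  rw [vnEntropy_eq_sum_roots_charpoly hAB, vnEntropy_eq_sum_roots_charpoly hBA]
  simpa [Multiset.map_nsmul, Multiset.sum_nsmul] using
    congrArg (fun s => (s.map fun z : ℂ => Real.negMulLog z.re).sum) hroots

lemma vnEntropy_isometry_conj {W : Matrix M N ℂ} (hW : Wᴴ * W = 1) (A : Matrix N N ℂ) :
    vnEntropy (W * A * Wᴴ) = vnEntropy A := by
  have hWA : Wᴴ * (W * A) = A := by rw [← Matrix.mul_assoc, hW, Matrix.one_mul]
  by_cases hA : A.IsHermitian
  · rw [vnEntropy_mul_comm (isHermitian_mul_mul_conjTranspose W hA) (hWA.symm ▸ hA), hWA]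
  · have hWAW : ¬(W * A * Wᴴ).IsHermitian := fun h => hA <| by
      simpa [← Matrix.mul_assoc, hW, Matrix.mul_assoc A] using isHermitian_conjTranspose_mul_mul W h
    rw [vnEntropy, vnEntropy, dif_neg hA, dif_neg hWAW]

lemma vnEntropy_smul {A : Matrix N N ℂ} (hA : A.IsHermitian) (p : ℝ) :
    vnEntropy ((p : ℂ) • A) = p * vnEntropy A + A.trace.re * Real.negMulLog p := by
  set U : Matrix N N ℂ := ↑hA.eigenvectorUnitary
  have hU : Uᴴ * U = 1 := Unitary.coe_star_mul_self _
  have hspec : A = U * diagonal (fun i => (hA.eigenvalues i : ℂ)) * Uᴴ := hA.spectral_theorem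
  have hpA : (p : ℂ) • A = U * diagonal (fun i => ((p * hA.eigenvalues i : ℝ) : ℂ)) * Uᴴ := by
    conv_lhs => rw [hspec, ← Matrix.smul_mul, ← Matrix.mul_smul, ← diagonal_smul]
    simp [Pi.smul_def]
  have htr : A.trace.re = ∑ i, hA.eigenvalues i := by simp [hA.trace_eq_sum_eigenvalues]
  rw [hpA, vnEntropy_isometry_conj hU, vnEntropy_diagonal, vnEntropy_eq_sum_eigenvalues hA, htr,
    Finset.mul_sum, Finset.sum_mul, ← Finset.sum_add_distrib]
  refine Finset.sum_congr rfl fun i _ => ?_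
  rw [Real.negMulLog_mul]
  ring

lemma vnEntropy_eq_mul_vnEntropy_inv_smul_add {A : Matrix N N ℂ} (hA : A.PosSemidef) {p : ℝ}
    (hp : A.trace = p) :
    vnEntropy A = p * vnEntropy ((p : ℂ)⁻¹ • A) + Real.negMulLog p := by
  rcases eq_or_ne p 0 with rfl | hp0
  · simp [hA.trace_eq_zero_iff.1 (by simpa using hp)]
  · have hpC : (p : ℂ) ≠ 0 := Complex.ofReal_ne_zero.2 hp0
    have hherm : ((p : ℂ)⁻¹ • A).IsHermitian := hA.1.smul (by simp [isSelfAdjoint_iff])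
    have htr : ((p : ℂ)⁻¹ • A).trace = 1 := by rw [trace_smul, hp, smul_eq_mul, inv_mul_cancel₀ hpC]
    simpa [smul_smul, hpC, htr] using vnEntropy_smul hherm p

lemma vnEntropy_blockDiagonal {R : ι → Matrix M M ℂ} (hR : ∀ μ, (R μ).IsHermitian) :
    vnEntropy (blockDiagonal R) = ∑ μ, vnEntropy (R μ) := by
  rw [vnEntropy_eq_sum_roots_charpoly (isHermitian_blockDiagonal_iff.2 hR), charpoly_blockDiagonal,
    Polynomial.roots_prod _ _ (Finset.prod_ne_zero_iff.2 fun μ _ => (charpoly_monic _).ne_zero),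
    Multiset.map_bind, Multiset.sum_bind]
  simp only [vnEntropy_eq_sum_roots_charpoly (hR _)]
  rfl

end Entropy

section OneKronecker

variable {m n q r α : Type*} [CommSemiring α] [DecidableEq m]

lemma one_kronecker_mul_apply [Fintype m] [Fintype n] (K : Matrix q n α)
    (M : Matrix (m × n) r α) (i : m) (x : q) (y : r) :
    (((1 : Matrix m m α) ⊗ₖ K) * M) (i, x) y = ∑ k, K x k * M (i, k) y := by
  simp [mul_apply, Fintype.sum_prod_type, one_apply]

lemma mul_one_kronecker_apply [Fintype m] [Fintype n] (M : Matrix r (m × n) α)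
    (L : Matrix n q α) (x : r) (j : m) (y : q) :
    (M * ((1 : Matrix m m α) ⊗ₖ L)) x (j, y) = ∑ l, M x (j, l) * L l y := by
  simp [mul_apply, Fintype.sum_prod_type, one_apply]

lemma conjTranspose_one_kronecker [StarRing α] (K : Matrix q n α) :
    ((1 : Matrix m m α) ⊗ₖ K)ᴴ = (1 : Matrix m m α) ⊗ₖ Kᴴ := by
  rw [conjTranspose_kronecker, conjTranspose_one]

lemma conjTranspose_one_kronecker_mul_self [StarRing α] [Fintype m] [Fintype q]
    [DecidableEq n] {V : Matrix q n α} (hV : Vᴴ * V = 1) :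
    ((1 : Matrix m m α) ⊗ₖ V)ᴴ * ((1 : Matrix m m α) ⊗ₖ V) = 1 := by
  rw [conjTranspose_one_kronecker, ← mul_kronecker_mul, hV, Matrix.one_mul, one_kronecker_one]

end OneKronecker

section OrthonormalFamily

variable {m n ι : Type*} [Fintype m] [DecidableEq m] [Fintype n] [DecidableEq ι]

lemma proj_conjTranspose_mul_self {v : n → ℂ} (hv : star v ⬝ᵥ v = 1) :
    (proj v)ᴴ * proj v = proj v := by
  simp [proj, conjTranspose_vecMulVec, vecMulVec_mul_vecMulVec, hv]

lemma conjTranspose_mul_self_of_orthonormal {b : ι → n → ℂ}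
    (hb : ∀ μ ν, star (b μ) ⬝ᵥ b ν = if μ = ν then 1 else 0) :
    (of b)ᵀᴴ * (of b)ᵀ = 1 := by
  ext μ ν
  simpa [mul_apply, one_apply, dotProduct] using hb μ ν

lemma sum_proj_eq_one_of_orthonormal [DecidableEq n] {b : n → n → ℂ}
    (hb : ∀ μ ν, star (b μ) ⬝ᵥ b ν = if μ = ν then 1 else 0) : ∑ μ, proj (b μ) = 1 := by
  rw [← mul_eq_one_comm.1 (conjTranspose_mul_self_of_orthonormal hb)]
  ext k l
  simp [proj, Matrix.sum_apply, mul_apply, vecMulVec_apply]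

variable [DecidableEq n] [Fintype ι] {b : ι → n → ℂ}

lemma vnEntropy_sum_smul_proj (hb : ∀ μ ν, star (b μ) ⬝ᵥ b ν = if μ = ν then 1 else 0)
    (p : ι → ℝ) : vnEntropy (∑ μ, (p μ : ℂ) • proj (b μ)) = ∑ μ, Real.negMulLog (p μ) := by
  have hconj : ∑ μ, (p μ : ℂ) • proj (b μ) =
      (of b)ᵀ * diagonal (fun μ => (p μ : ℂ)) * (of b)ᵀᴴ := by
    ext k l
    simp [proj, Matrix.sum_apply, mul_apply, vecMulVec_apply, diagonal_apply, mul_left_comm,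
      mul_assoc]
  rw [hconj, vnEntropy_isometry_conj (conjTranspose_mul_self_of_orthonormal hb),
    vnEntropy_diagonal]

lemma vnEntropy_sum_kronecker_proj (hb : ∀ μ ν, star (b μ) ⬝ᵥ b ν = if μ = ν then 1 else 0)
    {R : ι → Matrix m m ℂ} (hR : ∀ μ, (R μ).IsHermitian) :
    vnEntropy (∑ μ, R μ ⊗ₖ proj (b μ)) = ∑ μ, vnEntropy (R μ) := by
  have hconj : ∑ μ, R μ ⊗ₖ proj (b μ) =
      ((1 : Matrix m m ℂ) ⊗ₖ (of b)ᵀ) * blockDiagonal R * ((1 : Matrix m m ℂ) ⊗ₖ (of b)ᵀ)ᴴ := by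
    ext ⟨i, k⟩ ⟨j, l⟩
    simp [conjTranspose_one_kronecker, one_kronecker_mul_apply, mul_one_kronecker_apply, proj,
      Matrix.sum_apply, vecMulVec_apply, blockDiagonal_apply, mul_left_comm, mul_assoc]
  rw [hconj, vnEntropy_isometry_conj
    (conjTranspose_one_kronecker_mul_self (conjTranspose_mul_self_of_orthonormal hb)),
    vnEntropy_blockDiagonal hR]

end OrthonormalFamily

section PartialTrace

variable {m n q : Type*}

/-- Partial trace over the last factor of a tripartite system, bracketed as `A ⊗ (B ⊗ C)`. -/
noncomputable def ptraceC [Fintype q] (σ : Matrix (m × (n × q)) (m × (n × q)) ℂ) :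
    Matrix (m × n) (m × n) ℂ :=
  of fun i j => ∑ c, σ (i.1, (i.2, c)) (j.1, (j.2, c))

lemma posSemidef_ptraceB [Fintype n] {M : Matrix (m × n) (m × n) ℂ} (hM : M.PosSemidef) :
    (ptraceB M).PosSemidef := by
  have hsum : ptraceB M = ∑ k, M.submatrix (fun i => (i, k)) fun j => (j, k) := by
    ext i j
    simp [ptraceB, Matrix.sum_apply]
  rw [hsum]
  exact posSemidef_sum _ fun k _ => hM.submatrix _

variable [Fintype m]

lemma ptraceB_ptraceA [Fintype q] (σ : Matrix (m × (n × q)) (m × (n × q)) ℂ) :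
    ptraceB (ptraceA σ) = ptraceA (ptraceC σ) := by
  ext i j
  exact Finset.sum_comm

lemma ptraceA_sum_kronecker {ι : Type*} [Fintype ι] (R : ι → Matrix m m ℂ)
    (P : ι → Matrix n n ℂ) : ptraceA (∑ μ, R μ ⊗ₖ P μ) = ∑ μ, (R μ).trace • P μ := by
  ext k l
  simp only [ptraceA, of_apply, Matrix.sum_apply, kroneckerMap_apply, Matrix.smul_apply, trace,
    diag_apply, smul_eq_mul, Finset.sum_mul]
  exact Finset.sum_comm

variable [Fintype n]

lemma trace_ptraceA (M : Matrix (m × n) (m × n) ℂ) : (ptraceA M).trace = M.trace := by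
  simp only [ptraceA, trace, diag_apply, of_apply, Fintype.sum_prod_type_right]

lemma trace_ptraceB (M : Matrix (m × n) (m × n) ℂ) : (ptraceB M).trace = M.trace := by
  simp only [ptraceB, trace, diag_apply, of_apply, Fintype.sum_prod_type]

variable [DecidableEq m]

lemma ptraceA_one_kronecker_mul_mul (K : Matrix q n ℂ) (M : Matrix (m × n) (m × n) ℂ)
    (L : Matrix n q ℂ) :
    ptraceA (((1 : Matrix m m ℂ) ⊗ₖ K) * M * ((1 : Matrix m m ℂ) ⊗ₖ L)) = K * ptraceA M * L := by
  ext x y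
  simp only [ptraceA, of_apply, mul_one_kronecker_apply, one_kronecker_mul_apply]
  simp only [mul_apply, of_apply, Finset.mul_sum, Finset.sum_mul]
  rw [Finset.sum_comm]
  exact Finset.sum_congr rfl fun l _ => Finset.sum_comm

lemma ptraceB_one_kronecker_mul_comm [Fintype q] (K : Matrix n q ℂ)
    (M : Matrix (m × q) (m × n) ℂ) :
    ptraceB (((1 : Matrix m m ℂ) ⊗ₖ K) * M) = ptraceB (M * ((1 : Matrix m m ℂ) ⊗ₖ K)) := by
  ext i j
  simp only [ptraceB, of_apply, mul_one_kronecker_apply, one_kronecker_mul_apply, mul_comm]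
  exact Finset.sum_comm

end PartialTrace

section Measurement

variable {m n ι : Type*} [Fintype m] [DecidableEq m] [Fintype n]

/-- Unnormalised conditional state `Tr_B((1 ⊗ |v⟩⟨v|) ρ)` of `A` after the outcome `v` on `B`; its
trace is the probability of that outcome. -/
noncomputable def condState (ρ : Matrix (m × n) (m × n) ℂ) (v : n → ℂ) : Matrix m m ℂ :=
  ptraceB (((1 : Matrix m m ℂ) ⊗ₖ proj v) * ρ)

lemma posSemidef_condState {ρ : Matrix (m × n) (m × n) ℂ} (hρ : ρ.PosSemidef) (v : n → ℂ) :
    (condState ρ v).PosSemidef := by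
  set K : Matrix n Unit ℂ := replicateCol Unit v with hK
  have hproj : (1 : Matrix m m ℂ) ⊗ₖ proj v =
      ((1 : Matrix m m ℂ) ⊗ₖ K) * ((1 : Matrix m m ℂ) ⊗ₖ K)ᴴ := by
    rw [conjTranspose_one_kronecker, ← mul_kronecker_mul, Matrix.one_mul, proj, vecMulVec_eq Unit,
      hK, conjTranspose_replicateCol]
  rw [condState, hproj, Matrix.mul_assoc, ptraceB_one_kronecker_mul_comm]
  exact posSemidef_ptraceB (hρ.conjTranspose_mul_mul_same _)

lemma trace_condState (ρ : Matrix (m × n) (m × n) ℂ) (v : n → ℂ) :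
    (condState ρ v).trace = star v ⬝ᵥ ptraceA ρ *ᵥ v := by
  classical
  have hA : ptraceA (((1 : Matrix m m ℂ) ⊗ₖ proj v) * ρ) = proj v * ptraceA ρ := by
    simpa using ptraceA_one_kronecker_mul_mul (proj v) ρ 1
  rw [condState, trace_ptraceB, ← trace_ptraceA, hA, trace_mul_comm, proj, mul_vecMulVec,
    trace_vecMulVec, dotProduct_comm]

lemma one_kronecker_proj_conj (ρ : Matrix (m × n) (m × n) ℂ) (v : n → ℂ) :
    ((1 : Matrix m m ℂ) ⊗ₖ proj v) * ρ * ((1 : Matrix m m ℂ) ⊗ₖ proj v)ᴴ =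
      condState ρ v ⊗ₖ proj v := by
  ext ⟨i, x⟩ ⟨j, y⟩
  simp only [condState, ptraceB, of_apply, kroneckerMap_apply, conjTranspose_one_kronecker,
    mul_one_kronecker_apply, one_kronecker_mul_apply, proj, conjTranspose_vecMulVec, star_star,
    vecMulVec_apply, Finset.sum_mul]
  exact Finset.sum_congr rfl fun l _ => Finset.sum_congr rfl fun k _ => by ring

/-- Stinespring dilation `|ψ⟩ ↦ ∑ μ, K μ |ψ⟩ ⊗ |μ⟩` of the channel with Kraus operators `K μ`;
for `K μ = |b μ⟩⟨b μ|` it is the isometry `V` of the measurement. -/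
def stinespring (K : ι → Matrix n n ℂ) : Matrix (n × ι) n ℂ :=
  of fun kμ j => K kμ.2 kμ.1 j

variable [Fintype ι]

lemma stinespring_conjTranspose_mul_self (K : ι → Matrix n n ℂ) :
    (stinespring K)ᴴ * stinespring K = ∑ μ, (K μ)ᴴ * K μ := by
  ext i j
  simp [stinespring, mul_apply, Matrix.sum_apply, Fintype.sum_prod_type_right]

lemma ptraceC_stinespring_conj (K : ι → Matrix n n ℂ) (ρ : Matrix (m × n) (m × n) ℂ) :
    ptraceC (((1 : Matrix m m ℂ) ⊗ₖ stinespring K) * ρ *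
        ((1 : Matrix m m ℂ) ⊗ₖ stinespring K)ᴴ) =
      ∑ μ, ((1 : Matrix m m ℂ) ⊗ₖ K μ) * ρ * ((1 : Matrix m m ℂ) ⊗ₖ K μ)ᴴ := by
  ext i j
  simp only [Matrix.sum_apply]
  rfl

end Measurement

theorem stmt15_general {m n ι : Type*} [Fintype m] [DecidableEq m] [Fintype n] [DecidableEq n]
    [Fintype ι] [DecidableEq ι] {ρ : Matrix (m × n) (m × n) ℂ} (hρ : ρ.PosSemidef)
    {b : ι → n → ℂ} (hon : ∀ μ ν, star (b μ) ⬝ᵥ b ν = if μ = ν then 1 else 0)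
    (hone : ∑ μ, proj (b μ) = 1) {σ : Matrix (m × (n × ι)) (m × (n × ι)) ℂ}
    (hσ : σ = ((1 : Matrix m m ℂ) ⊗ₖ stinespring fun μ => proj (b μ)) * ρ *
      ((1 : Matrix m m ℂ) ⊗ₖ stinespring fun μ => proj (b μ))ᴴ)
    {p : ι → ℝ} (hp : ∀ μ, p μ = (star (b μ) ⬝ᵥ ptraceA ρ *ᵥ b μ).re) :
    vnEntropy (ptraceC σ) + vnEntropy (ptraceA σ) - vnEntropy σ -
        vnEntropy (ptraceB (ptraceA σ)) =
      (∑ μ, p μ * vnEntropy ((p μ : ℂ)⁻¹ • condState ρ (b μ))) +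
        vnEntropy (ptraceA ρ) - vnEntropy ρ := by
  set V := stinespring fun μ => proj (b μ)
  have hV : Vᴴ * V = 1 := by
    simp only [V, stinespring_conjTranspose_mul_self, ← hone]
    exact Finset.sum_congr rfl fun μ _ => proj_conjTranspose_mul_self (by simp [hon])
  have hR (μ : ι) : (condState ρ (b μ)).PosSemidef := posSemidef_condState hρ (b μ)
  have htr (μ : ι) : (condState ρ (b μ)).trace = p μ := by
    rw [hp, ← trace_condState]
    exact Complex.eq_re_of_ofReal_le (hR μ).trace_nonneg
  have hAB : ptraceC σ = ∑ μ, condState ρ (b μ) ⊗ₖ proj (b μ) := by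
    simp only [hσ, V, ptraceC_stinespring_conj, one_kronecker_proj_conj]
  have hBC : ptraceA σ = V * ptraceA ρ * Vᴴ := by
    rw [hσ, conjTranspose_one_kronecker, ptraceA_one_kronecker_mul_mul]
  have hB : ptraceB (ptraceA σ) = ∑ μ, (p μ : ℂ) • proj (b μ) := by
    simp only [ptraceB_ptraceA, hAB, ptraceA_sum_kronecker, htr]
  have hSABC : vnEntropy σ = vnEntropy ρ := by
    rw [hσ, vnEntropy_isometry_conj (conjTranspose_one_kronecker_mul_self hV)]
  have hSAB : vnEntropy (ptraceC σ) = ∑ μ, p μ * vnEntropy ((p μ : ℂ)⁻¹ • condState ρ (b μ)) +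
      ∑ μ, Real.negMulLog (p μ) := by
    rw [hAB, vnEntropy_sum_kronecker_proj hon fun μ => (hR μ).1, ← Finset.sum_add_distrib]
    exact Finset.sum_congr rfl fun μ _ => vnEntropy_eq_mul_vnEntropy_inv_smul_add (hR μ) (htr μ)
  rw [hSAB, hSABC, hB, vnEntropy_sum_smul_proj hon, hBC, vnEntropy_isometry_conj hV]
  ring

theorem stmt15 {m n : ℕ}
    (ρAB : Matrix (Fin m × Fin n) (Fin m × Fin n) ℂ)
    (hρ : ρAB.PosSemidef) (htr : ρAB.trace = 1)
    (b : Fin n → Fin n → ℂ)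
    (hon : ∀ μ ν, star (b μ) ⬝ᵥ b ν = if μ = ν then 1 else 0)
    (V : Matrix (Fin n × Fin n) (Fin n) ℂ)
    (hV : V = Matrix.of fun kc j => b kc.2 kc.1 * star (b kc.2 j))
    (σABC : Matrix (Fin m × (Fin n × Fin n)) (Fin m × (Fin n × Fin n)) ℂ)
    (hσ : σABC = ((1 : Matrix (Fin m) (Fin m) ℂ) ⊗ₖ V) * ρAB *
      ((1 : Matrix (Fin m) (Fin m) ℂ) ⊗ₖ V)ᴴ)
    (ρB : Matrix (Fin n) (Fin n) ℂ) (hρB : ρB = ptraceA ρAB)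
    (p : Fin n → ℝ) (hp : ∀ μ, p μ = (star (b μ) ⬝ᵥ ρB *ᵥ b μ).re) :
    vnEntropy (Matrix.of fun (i j : Fin m × Fin n) =>
        ∑ cc, σABC (i.1, (i.2, cc)) (j.1, (j.2, cc))) +
      vnEntropy (ptraceA σABC) - vnEntropy σABC -
      vnEntropy (ptraceB (ptraceA σABC)) =
    (∑ μ, p μ * vnEntropy (((p μ : ℂ))⁻¹ •
        ptraceB (((1 : Matrix (Fin m) (Fin m) ℂ) ⊗ₖ proj (b μ)) * ρAB))) +
      vnEntropy ρB - vnEntropy ρAB := by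
  subst hV hσ hρB
  exact stmt15_general hρ hon (sum_proj_eq_one_of_orthonormal hon) rfl hp
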